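/- Let κ ≥ 2 be an integer. There exists δ = δ(κ) ∈ (0,1), depending only on κ, such that for all R ∈ ℤ_{≥0}^m, C ∈ ℤ_{≥0}^n with |R| = |C| = N > 0 and (max_{1≤i≤m} r_i)(max_{1≤j≤n} c_j) < δκN, one has mn·H^max_κ(N/(mn)) − m·Σ_{j=1}^n H^max_κ(c_j/m) ≥ n·Σ_{i=1}^m H^max_κ(r_i/n) − Σ_{i=1}^m Σ_{j=1}^n H^max_κ(r_i c_j / N), with strict inequality if neither R nor C is a constant vector. -/

import Mathlib

open Real Filter Finset

noncomputable section

/-- `ω(n) = n^n / n!`. -/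
def omegaFn (n : ℕ) : ℝ := (n : ℝ) ^ n / (n.factorial : ℝ)

/-- `Ω(V)`: the sum of `ω(v)` over the entries of a vector `V`. -/
def OmegaVec {I : Type*} [Fintype I] (V : I → ℕ) : ℝ := ∑ i, omegaFn (V i)

/-- `Ω(K)`: the sum of `ω(k)` over the entries of a matrix `K`. -/
def OmegaMat {I J : Type*} [Fintype I] [Fintype J] (K : I → J → ℕ) : ℝ :=
  ∑ i, ∑ j, omegaFn (K i j)

/-- `T_K(R,C)`: the number of nonnegative-integer matrices with row sums `R`,
column sums `C`, and entries bounded by `K` (a bound of `⊤` means unbounded). -/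
def tableCount {I J : Type*} [Fintype I] [Fintype J]
    (K : I → J → ℕ∞) (R : I → ℕ) (C : J → ℕ) : ℕ :=
  Set.ncard {A : I → J → ℕ |
    (∀ i, ∑ j, A i j = R i) ∧ (∀ j, ∑ i, A i j = C j) ∧ ∀ i j, (A i j : ℕ∞) ≤ K i j}

/-- The `s`-fold cloning of a margin vector. -/
def cloneVec {m : ℕ} (s : ℕ) (R : Fin m → ℕ) : Fin s × Fin m → ℕ :=
  fun p => s * R p.2

/-- The `s`-fold cloning of a bound matrix. -/
def cloneMat {m n : ℕ} (s : ℕ) (K : Fin m → Fin n → ℕ∞) :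
    Fin s × Fin m → Fin s × Fin n → ℕ∞ :=
  fun p q => K p.2 q.2

/-- The mean of the truncated geometric distribution on `{0,…,κ}` with ratio `q`. -/
def tgMean (κ : ℕ∞) (q : ℝ) : ℝ :=
  if κ = ⊤ then q / (1 - q)
  else (∑ t ∈ Finset.range (κ.toNat + 1), (t : ℝ) * q ^ t) /
    (∑ t ∈ Finset.range (κ.toNat + 1), q ^ t)

/-- The parameter `q(x;κ)` of the truncated geometric distribution `TG(x;κ)` with mean `x`. -/
def tgQ (κ : ℕ∞) (x : ℝ) : ℝ := sInf {q : ℝ | 0 ≤ q ∧ x ≤ tgMean κ q}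

/-- The parameter `p(x;κ)` of the truncated geometric distribution `TG(x;κ)` with mean `x`. -/
def tgP (κ : ℕ∞) (x : ℝ) : ℝ :=
  if κ = ⊤ then 1 - tgQ κ x
  else (∑ t ∈ Finset.range (κ.toNat + 1), tgQ κ x ^ t)⁻¹

/-- The probability mass function of `TG(x;κ)`: `Pr[X=t] = p q^t` for `t ∈ {0,…,κ}`. -/
def tgPMF (κ : ℕ∞) (x : ℝ) (t : ℕ) : ℝ :=
  if (t : ℕ∞) ≤ κ then tgP κ x * tgQ κ x ^ t else 0

/-- `H^max_κ(x)`: the (base-e) entropy of the truncated geometric distribution `TG(x;κ)`. -/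
def Hmax (κ : ℕ∞) (x : ℝ) : ℝ := -∑' t : ℕ, tgPMF κ x t * Real.log (tgPMF κ x t)

/-- The `(κ+1)`-nomial coefficient `(n choose r)_κ`: the coefficient of `x^r` in
`(1+x+⋯+x^κ)^n`; for `κ = ∞` it is `(r+n-1).choose r`. -/
def knomial (κ : ℕ∞) (n r : ℕ) : ℕ :=
  if κ = ⊤ then (r + n - 1).choose r
  else ((∑ t ∈ Finset.range (κ.toNat + 1), (Polynomial.X : Polynomial ℕ) ^ t) ^ n).coeff r

/-- The independence-heuristic estimate `I_κ(R,C)`. -/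
def indepEst (κ : ℕ∞) {I J : Type*} [Fintype I] [Fintype J] (R : I → ℕ) (C : J → ℕ) : ℝ :=
  ((knomial κ (Fintype.card I * Fintype.card J) (∑ i, R i) : ℝ))⁻¹ *
    (∏ i, (knomial κ (Fintype.card J) (R i) : ℝ)) *
    ∏ j, (knomial κ (Fintype.card I) (C j) : ℝ)

/-- The transportation polytope `Π_κ(R,C)` of real matrices with entries in `[0,κ]`,
row sums `R` and column sums `C`. -/
def transportPolytope (κ : ℕ∞) {m n : ℕ} (R : Fin m → ℕ) (C : Fin n → ℕ) :
    Set (Fin m → Fin n → ℝ) :=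
  {Z | (∀ i j, 0 ≤ Z i j) ∧ (∀ i j, κ ≠ ⊤ → Z i j ≤ (κ.toNat : ℝ)) ∧
    (∀ i, ∑ j, Z i j = (R i : ℝ)) ∧ ∀ j, ∑ i, Z i j = (C j : ℝ)}

/-- The generating function `G(x,y) = ∏_{i,j} (1 + x_i y_j + ⋯ + (x_i y_j)^{k_{ij}})`. -/
def genFun {m n : ℕ} (K : Fin m → Fin n → ℕ) (x : Fin m → ℝ) (y : Fin n → ℝ) : ℝ :=
  ∏ i, ∏ j, ∑ t ∈ Finset.range (K i j + 1), (x i * y j) ^ t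

/-- The monomial `x^R = ∏_i x_i^{r_i}`. -/
def monom {m : ℕ} (x : Fin m → ℝ) (R : Fin m → ℕ) : ℝ := ∏ i, x i ^ R i

/-- The concave roof function `f_K(R,C)`: the supremum of `∑_t α_t ln T_K(R^t,C^t)` over
convex combinations of integer margins averaging to `(R,C)` (and `⊥ = -∞` if none exist). -/
def fK {m n : ℕ} (K : Fin m → Fin n → ℕ) (R : Fin m → ℝ) (C : Fin n → ℝ) : EReal :=
  sSup {v : EReal | ∃ (p : ℕ) (α : Fin p → ℝ)
    (Rs : Fin p → Fin m → ℕ) (Cs : Fin p → Fin n → ℕ),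
    1 ≤ p ∧ (∀ t, 0 ≤ α t) ∧ ∑ t, α t = 1 ∧
    (∀ i, ∑ t, α t * (Rs t i : ℝ) = R i) ∧ (∀ j, ∑ t, α t * (Cs t j : ℝ) = C j) ∧
    (∀ t, 0 < tableCount (fun i j => (K i j : ℕ∞)) (Rs t) (Cs t)) ∧
    v = ((∑ t, α t * Real.log (tableCount (fun i j => (K i j : ℕ∞)) (Rs t) (Cs t)) : ℝ) : EReal)}

/-- `e^x` for an extended real `x`, with `e^{-∞} = 0`. -/
def expE (e : EReal) : ℝ := if e = ⊥ then 0 else Real.exp e.toReal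

end

/-!
Put `w = C / N` and `F(a) = ∑ⱼ H(a wⱼ) - n H(a / n)`. The difference of the two sides of the
inequality is the Jensen gap `∑ᵢ F(rᵢ) - m F(N / m)`, so it suffices that `F` be convex.
Near `0⁺` the entropy is `H(x) = -x log x + A(x)` with `A` analytic and `A''(0) = 1` (for `κ = 1`
it would be `-1`). The term `-x log x` contributes a linear function to `F`. For the rest,
`a² F''(a) = ∑ⱼ g(a wⱼ) - n g(a / n)` with `g(x) = x² A''(x)`, which is strictly convex near `0`;
a second application of Jensen's inequality makes this nonnegative, and positive for `a > 0` unless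
`w` is constant. The sparsity of the margins keeps all arguments in that neighbourhood of `0`.
-/

open scoped Topology

section Convexity

lemma strictConvexOn_of_hasDerivAt2_pos {D : Set ℝ} {f f' f'' : ℝ → ℝ} (hD : Convex ℝ D)
    (hf : ContinuousOn f D) (hf' : ∀ x ∈ interior D, HasDerivAt f (f' x) x)
    (hf'' : ∀ x ∈ interior D, HasDerivAt f' (f'' x) x) (hpos : ∀ x ∈ interior D, 0 < f'' x) :
    StrictConvexOn ℝ D f := by
  refine strictConvexOn_of_deriv2_pos hD hf fun x hx => ?_
  have hderiv : deriv f =ᶠ[𝓝 x] f' := by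
    filter_upwards [isOpen_interior.mem_nhds hx] with y hy using (hf' y hy).deriv
  rw [Function.iterate_succ_apply, Function.iterate_one, hderiv.deriv_eq, (hf'' x hx).deriv]
  exact hpos x hx

lemma card_mul_map_mean_le_sum {ι : Type*} [Fintype ι] {s : Set ℝ} {f : ℝ → ℝ} {x : ι → ℝ}
    (hf : ConvexOn ℝ s f) (hx : ∀ i, x i ∈ s) :
    Fintype.card ι * f ((∑ i, x i) / Fintype.card ι) ≤ ∑ i, f (x i) := by
  rcases isEmpty_or_nonempty ι with _ | _
  · simp
  have jensen := hf.map_sum_le (t := univ) (w := fun _ => (Fintype.card ι : ℝ)⁻¹)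
    (fun _ _ => by positivity) (by simp) fun i _ => hx i
  simp only [smul_eq_mul, ← mul_sum] at jensen
  rwa [div_eq_inv_mul, ← le_inv_mul_iff₀ (by positivity)]

lemma card_mul_map_mean_lt_sum {ι : Type*} [Fintype ι] {s : Set ℝ} {f : ℝ → ℝ} {x : ι → ℝ}
    (hf : StrictConvexOn ℝ s f) (hx : ∀ i, x i ∈ s) (hne : ∃ i i', x i ≠ x i') :
    Fintype.card ι * f ((∑ i, x i) / Fintype.card ι) < ∑ i, f (x i) := by
  obtain ⟨i, i', hii'⟩ := hne
  have : Nonempty ι := ⟨i⟩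
  have jensen := hf.map_sum_lt (t := univ) (w := fun _ => (Fintype.card ι : ℝ)⁻¹)
    (fun _ _ => by positivity) (by simp) (fun i _ => hx i)
    ⟨i, mem_univ i, i', mem_univ i', hii'⟩
  simp only [smul_eq_mul, ← mul_sum] at jensen
  rwa [div_eq_inv_mul, ← lt_inv_mul_iff₀ (by positivity)]

lemma eventually_forall_mem_Ico {a : ℝ} {p : ℝ → Prop} (hp : ∀ᶠ x in 𝓝[≥] a, p x) :
    ∀ᶠ b in 𝓝[>] a, ∀ x ∈ Set.Ico a b, p x := by
  obtain ⟨u, hu, hsub⟩ := mem_nhdsGE_iff_exists_Ico_subset.1 hp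
  filter_upwards [Ioo_mem_nhdsGT hu] with b hb x hx using hsub ⟨hx.1, hx.2.trans hb.2⟩

lemma deriv2_sq_mul_zero {f : ℝ → ℝ} (hf : AnalyticAt ℝ f 0) :
    deriv^[2] (fun x => x ^ 2 * f x) 0 = 2 * f 0 := by
  have hderiv : deriv (fun x => x ^ 2 * f x) =ᶠ[𝓝 0] fun x => x * (2 * f x + x * deriv f x) := by
    filter_upwards [hf.eventually_analyticAt] with x hx
    refine (((hasDerivAt_pow 2 x).fun_mul hx.differentiableAt.hasDerivAt).congr_deriv ?_).deriv
    push_cast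
    ring
  have hdiff : DifferentiableAt ℝ (fun x => 2 * f x + x * deriv f x) 0 := by
    have := hf.deriv
    exact AnalyticAt.differentiableAt (by fun_prop)
  rw [Function.iterate_succ_apply, Function.iterate_one, hderiv.deriv_eq,
    ((hasDerivAt_id' (0 : ℝ)).fun_mul hdiff.hasDerivAt).deriv]
  ring

lemma eventually_strictConvexOn_sq_mul {f : ℝ → ℝ} (hf : AnalyticAt ℝ f 0) (hpos : 0 < f 0) :
    ∀ᶠ b in 𝓝[>] 0, StrictConvexOn ℝ (Set.Ico 0 b) fun x => x ^ 2 * f x := by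
  set g : ℝ → ℝ := fun x => x ^ 2 * f x
  have hg : AnalyticAt ℝ g 0 := by fun_prop
  have hg_pos : 0 < deriv^[2] g 0 := by
    rw [deriv2_sq_mul_zero hf]
    positivity
  have hnear : ∀ᶠ x in 𝓝 0, AnalyticAt ℝ g x ∧ 0 < deriv^[2] g x :=
    hg.eventually_analyticAt.and (hg.deriv.deriv.continuousAt.eventually_const_lt hg_pos)
  filter_upwards [eventually_forall_mem_Ico (hnear.filter_mono nhdsWithin_le_nhds)] with b hb
  exact strictConvexOn_of_deriv2_pos' (convex_Ico 0 b)
    (fun x hx => (hb x hx).1.continuousAt.continuousWithinAt) fun x hx => (hb x hx).2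

end Convexity

section DilationGap

variable {I J : Type*} [Fintype I] [Fintype J]

/-- The gap between the sums of `f` over the dilations `a • w` and `a • u` of a weight vector `w`
and the uniform weight vector `u = 1 / |J|`. The terms carry the factors `w j ^ k` and
`(1 / |J|) ^ k`, so that the gap of order `k` is the `k`-th derivative in `a` of the gap of
order `0`, with `f` in place of its `k`-th primitive. -/
noncomputable def dilationGap (k : ℕ) (f : ℝ → ℝ) (w : J → ℝ) (a : ℝ) : ℝ :=
  ∑ j, (w j ^ k * f (a * w j) - (1 / Fintype.card J : ℝ) ^ k * f (a * (1 / Fintype.card J)))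

lemma dilationGap_zero_eq (f : ℝ → ℝ) (w : J → ℝ) (a : ℝ) :
    dilationGap 0 f w a = ∑ j, f (a * w j) - Fintype.card J * f (a / Fintype.card J) := by
  simp [dilationGap, sum_sub_distrib, div_eq_mul_inv]

lemma hasDerivAt_dilationGap {k : ℕ} {f f' : ℝ → ℝ} {w : J → ℝ} {a : ℝ}
    (hw : ∀ j, HasDerivAt f (f' (a * w j)) (a * w j))
    (hu : HasDerivAt f (f' (a * (1 / Fintype.card J))) (a * (1 / Fintype.card J))) :
    HasDerivAt (dilationGap k f w) (dilationGap (k + 1) f' w a) a := by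
  have hterm {v : ℝ} (hv : HasDerivAt f (f' (a * v)) (a * v)) :
      HasDerivAt (fun a => v ^ k * f (a * v)) (v ^ (k + 1) * f' (a * v)) a :=
    ((hv.comp a (hasDerivAt_mul_const v)).const_mul (v ^ k)).congr_deriv (by ring)
  exact HasDerivAt.fun_sum fun j _ => (hterm (hw j)).fun_sub (hterm hu)

lemma pow_mul_dilationGap (k : ℕ) (f : ℝ → ℝ) (w : J → ℝ) (a : ℝ) :
    a ^ k * dilationGap k f w a = dilationGap 0 (fun x => x ^ k * f x) w a := by
  simp only [dilationGap, mul_sum, mul_pow, pow_zero]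
  exact sum_congr rfl fun j _ => by ring

lemma dilationGap_zero_negMulLog {w : J → ℝ} (hw : ∑ j, w j = 1) (a : ℝ) :
    dilationGap 0 negMulLog w a = a * dilationGap 0 negMulLog w 1 := by
  have hJ : (Fintype.card J : ℝ) ≠ 0 := by
    have : Nonempty J := not_isEmpty_iff.1 fun _ => by simp at hw
    positivity
  simp only [dilationGap_zero_eq, div_eq_mul_inv, negMulLog_mul, sum_add_distrib, ← sum_mul,
    ← mul_sum, hw, negMulLog_one]
  field_simp
  ring

lemma dilationGap_congr_add {k : ℕ} {f g h : ℝ → ℝ} {w : J → ℝ} {a : ℝ}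
    (hw : ∀ j, f (a * w j) = g (a * w j) + h (a * w j))
    (hu : f (a * (1 / Fintype.card J)) =
      g (a * (1 / Fintype.card J)) + h (a * (1 / Fintype.card J))) :
    dilationGap k f w a = dilationGap k g w a + dilationGap k h w a := by
  simp only [dilationGap, hw, hu, ← sum_add_distrib]
  exact sum_congr rfl fun j _ => by ring

lemma dilationGap_zero_nonneg {s : Set ℝ} {f : ℝ → ℝ} {w : J → ℝ} {a : ℝ}
    (hf : ConvexOn ℝ s f) (hw : ∑ j, w j = 1) (hmem : ∀ j, a * w j ∈ s) :
    0 ≤ dilationGap 0 f w a := by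
  have jensen := card_mul_map_mean_le_sum hf hmem
  rw [← mul_sum, hw, mul_one] at jensen
  rw [dilationGap_zero_eq]
  exact sub_nonneg.2 jensen

lemma dilationGap_zero_pos {s : Set ℝ} {f : ℝ → ℝ} {w : J → ℝ} {a : ℝ}
    (hf : StrictConvexOn ℝ s f) (hw : ∑ j, w j = 1) (hmem : ∀ j, a * w j ∈ s) (ha : a ≠ 0)
    (hne : ∃ j j', w j ≠ w j') : 0 < dilationGap 0 f w a := by
  obtain ⟨j, j', hjj'⟩ := hne
  have jensen := card_mul_map_mean_lt_sum hf hmem ⟨j, j', (mul_right_injective₀ ha).ne hjj'⟩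
  rw [← mul_sum, hw, mul_one] at jensen
  rw [dilationGap_zero_eq]
  exact sub_pos.2 jensen

section WeightVector

variable {w : J → ℝ} {b X : ℝ}

lemma mul_mem_Ico_of_mem_Icc {v a : ℝ} (hv : 0 ≤ v) (hX : X * v < b) (ha : a ∈ Set.Icc 0 X) :
    a * v ∈ Set.Ico 0 b :=
  ⟨mul_nonneg ha.1 hv, (mul_le_mul_of_nonneg_right ha.2 hv).trans_lt hX⟩

lemma mul_uniform_mem_Ico (hw₀ : ∀ j, 0 ≤ w j) (hw₁ : ∑ j, w j = 1) (hX : ∀ j, X * w j < b)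
    {a : ℝ} (ha : a ∈ Set.Icc 0 X) : a * (1 / Fintype.card J) ∈ Set.Ico 0 b := by
  have hmem (j : J) := mul_mem_Ico_of_mem_Icc (hw₀ j) (hX j) ha
  refine ⟨mul_nonneg ha.1 (by positivity), ?_⟩
  have : Nonempty J := not_isEmpty_iff.1 fun _ => by simp at hw₁
  have hsum : ∑ j, a * w j < ∑ _j : J, b :=
    sum_lt_sum_of_nonempty univ_nonempty fun j _ => (hmem j).2
  rw [← mul_sum, hw₁, mul_one, sum_const, card_univ, nsmul_eq_mul] at hsum
  rwa [mul_one_div, div_lt_iff₀' (by positivity)]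

variable {f f' f'' : ℝ → ℝ}

lemma hasDerivAt_dilationGap_of_mem_Icc {k : ℕ} (hf : ∀ x ∈ Set.Ico 0 b, HasDerivAt f (f' x) x)
    (hw₀ : ∀ j, 0 ≤ w j) (hw₁ : ∑ j, w j = 1) (hX : ∀ j, X * w j < b) {a : ℝ}
    (ha : a ∈ Set.Icc 0 X) :
    HasDerivAt (dilationGap k f w) (dilationGap (k + 1) f' w a) a :=
  hasDerivAt_dilationGap (fun j => hf _ (mul_mem_Ico_of_mem_Icc (hw₀ j) (hX j) ha))
    (hf _ (mul_uniform_mem_Ico hw₀ hw₁ hX ha))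

lemma convexOn_dilationGap (hf : ∀ x ∈ Set.Ico 0 b, HasDerivAt f (f' x) x)
    (hf' : ∀ x ∈ Set.Ico 0 b, HasDerivAt f' (f'' x) x)
    (hconv : ConvexOn ℝ (Set.Ico 0 b) fun x => x ^ 2 * f'' x)
    (hw₀ : ∀ j, 0 ≤ w j) (hw₁ : ∑ j, w j = 1) (hX : ∀ j, X * w j < b) :
    ConvexOn ℝ (Set.Icc 0 X) (dilationGap 0 f w) := by
  have hderiv {a} (ha : a ∈ Set.Icc 0 X) :=
    hasDerivAt_dilationGap_of_mem_Icc (k := 0) hf hw₀ hw₁ hX ha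
  have hderiv2 {a} (ha : a ∈ Set.Icc 0 X) :=
    hasDerivAt_dilationGap_of_mem_Icc (k := 1) hf' hw₀ hw₁ hX ha
  refine convexOn_of_hasDerivWithinAt2_nonneg (convex_Icc 0 X)
    (fun a ha => (hderiv ha).continuousAt.continuousWithinAt)
    (fun a ha => (hderiv (interior_subset ha)).hasDerivWithinAt)
    (fun a ha => (hderiv2 (interior_subset ha)).hasDerivWithinAt) fun a ha => ?_
  rw [interior_Icc] at ha
  refine nonneg_of_mul_nonneg_right (a := a ^ 2) ?_ (pow_pos ha.1 2)
  rw [pow_mul_dilationGap]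
  exact dilationGap_zero_nonneg hconv hw₁ fun j =>
    mul_mem_Ico_of_mem_Icc (hw₀ j) (hX j) (Set.Ioo_subset_Icc_self ha)

lemma strictConvexOn_dilationGap (hf : ∀ x ∈ Set.Ico 0 b, HasDerivAt f (f' x) x)
    (hf' : ∀ x ∈ Set.Ico 0 b, HasDerivAt f' (f'' x) x)
    (hconv : StrictConvexOn ℝ (Set.Ico 0 b) fun x => x ^ 2 * f'' x)
    (hw₀ : ∀ j, 0 ≤ w j) (hw₁ : ∑ j, w j = 1) (hX : ∀ j, X * w j < b)
    (hne : ∃ j j', w j ≠ w j') :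
    StrictConvexOn ℝ (Set.Icc 0 X) (dilationGap 0 f w) := by
  have hderiv {a} (ha : a ∈ Set.Icc 0 X) :=
    hasDerivAt_dilationGap_of_mem_Icc (k := 0) hf hw₀ hw₁ hX ha
  refine strictConvexOn_of_hasDerivAt2_pos (convex_Icc 0 X)
    (fun a ha => (hderiv ha).continuousAt.continuousWithinAt)
    (fun a ha => hderiv (interior_subset ha))
    (fun a ha => hasDerivAt_dilationGap_of_mem_Icc hf' hw₀ hw₁ hX (interior_subset ha))
    fun a ha => ?_
  rw [interior_Icc] at ha
  refine pos_of_mul_pos_right (a := a ^ 2) ?_ (sq_nonneg a)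
  rw [pow_mul_dilationGap]
  exact dilationGap_zero_pos hconv hw₁
    (fun j => mul_mem_Ico_of_mem_Icc (hw₀ j) (hX j) (Set.Ioo_subset_Icc_self ha)) ha.1.ne' hne

end WeightVector

lemma exists_convexOn_dilationGap_of_eq_negMulLog_add {H A : ℝ → ℝ} (hA : AnalyticAt ℝ A 0)
    (hA_pos : 0 < deriv^[2] A 0) (hH : ∀ᶠ x in 𝓝[≥] 0, H x = negMulLog x + A x) :
    ∃ b > 0, ∀ {J : Type*} [Fintype J] {w : J → ℝ} {X : ℝ},
      (∀ j, 0 ≤ w j) → ∑ j, w j = 1 → (∀ j, X * w j < b) →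
      ConvexOn ℝ (Set.Icc 0 X) (dilationGap 0 H w) ∧
      ((∃ j j', w j ≠ w j') → StrictConvexOn ℝ (Set.Icc 0 X) (dilationGap 0 H w)) := by
  obtain ⟨b, ⟨hnear, hconv⟩, hb⟩ := ((eventually_forall_mem_Ico
    (hH.and (hA.eventually_analyticAt.filter_mono nhdsWithin_le_nhds))).and
    (eventually_strictConvexOn_sq_mul hA.deriv.deriv hA_pos)).and self_mem_nhdsWithin |>.exists
  have hA' (x) (hx : x ∈ Set.Ico 0 b) : HasDerivAt A (deriv A x) x :=
    (hnear x hx).2.differentiableAt.hasDerivAt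
  have hA'' (x) (hx : x ∈ Set.Ico 0 b) : HasDerivAt (deriv A) (deriv (deriv A) x) x :=
    (hnear x hx).2.deriv.differentiableAt.hasDerivAt
  refine ⟨b, hb, fun {J _ w X} hw₀ hw₁ hX => ?_⟩
  have hsplit : Set.EqOn (dilationGap 0 A w + fun a => a * dilationGap 0 negMulLog w 1)
      (dilationGap 0 H w) (Set.Icc 0 X) := fun a ha => by
    rw [Pi.add_apply, add_comm, ← dilationGap_zero_negMulLog hw₁]
    exact (dilationGap_congr_add (fun j => (hnear _ (mul_mem_Ico_of_mem_Icc (hw₀ j) (hX j) ha)).1)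
      (hnear _ (mul_uniform_mem_Ico hw₀ hw₁ hX ha)).1).symm
  have hlinear : ConvexOn ℝ (Set.Icc 0 X) fun a => a * dilationGap 0 negMulLog w 1 :=
    (LinearMap.mulRight ℝ (dilationGap 0 negMulLog w 1)).convexOn (convex_Icc 0 X)
  exact ⟨((convexOn_dilationGap hA' hA'' hconv.convexOn hw₀ hw₁ hX).add hlinear).congr hsplit,
    fun hne => ((strictConvexOn_dilationGap hA' hA'' hconv hw₀ hw₁ hX hne).add_convexOn
      hlinear).congr hsplit⟩

lemma sum_dilationGap_sub_card_mul (H : ℝ → ℝ) (R : I → ℝ) (C : J → ℝ) {N : ℝ} (hN : N ≠ 0) :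
    ∑ i, dilationGap 0 H (fun j => C j / N) (R i) -
        Fintype.card I * dilationGap 0 H (fun j => C j / N) (N / Fintype.card I) =
      (Fintype.card I * Fintype.card J * H (N / (Fintype.card I * Fintype.card J)) -
          Fintype.card I * ∑ j, H (C j / Fintype.card I)) -
        (Fintype.card J * ∑ i, H (R i / Fintype.card J) - ∑ i, ∑ j, H (R i * C j / N)) := by
  have hcol (j : J) : N / Fintype.card I * (C j / N) = C j / Fintype.card I := by
    rw [mul_comm, div_mul_div_cancel₀ hN]
  simp only [dilationGap_zero_eq, hcol, sum_sub_distrib, ← mul_sum, mul_sub, ← mul_div_assoc,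
    div_div]
  ring

end DilationGap

section TruncatedGeometric

/-- The normalizing sum `1 + q + ⋯ + q ^ κ` of the truncated geometric distribution. -/
def tgPartition (κ : ℕ) (q : ℝ) : ℝ := ∑ t ∈ range (κ + 1), q ^ t

/-- The quotient `tgMean κ q / q`, extended to `q = 0` by cancelling the factor `q`. -/
noncomputable def tgMeanQuotient (κ : ℕ) (q : ℝ) : ℝ :=
  (∑ t ∈ range κ, (t + 1) * q ^ t) / tgPartition κ q

lemma tgPartition_pos (κ : ℕ) {q : ℝ} (hq : 0 ≤ q) : 0 < tgPartition κ q :=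
  geom_sum_pos hq κ.succ_ne_zero

lemma tgPartition_zero (κ : ℕ) : tgPartition κ 0 = 1 := by
  simp [tgPartition, sum_range_succ']

lemma tgMean_natCast (κ : ℕ) (q : ℝ) :
    tgMean κ q = (∑ t ∈ range (κ + 1), t * q ^ t) / tgPartition κ q := by
  simp [tgMean, tgPartition]

lemma tgMean_eq_mul_tgMeanQuotient (κ : ℕ) (q : ℝ) : tgMean κ q = q * tgMeanQuotient κ q := by
  rw [tgMean_natCast, tgMeanQuotient, sum_range_succ', ← mul_div_assoc, mul_sum]
  simp only [Nat.cast_zero, zero_mul, add_zero, Nat.cast_add_one]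
  congr 1
  exact sum_congr rfl fun t _ => by ring

/-- Chebyshev's sum argument: `2 (T(r) S(q) - T(q) S(r))`, with `S = ∑ q ^ t` and `T = ∑ t q ^ t`,
is the double sum of `(t - s) (r ^ t q ^ s - q ^ t r ^ s) ≥ 0`. -/
lemma strictMonoOn_tgMean {κ : ℕ} (hκ : κ ≠ 0) : StrictMonoOn (tgMean κ) (Set.Ici 0) := by
  intro q (hq : 0 ≤ q) r (hr : 0 ≤ r) hqr
  have hcross (s d : ℕ) : 0 ≤ r ^ (s + d) * q ^ s - q ^ (s + d) * r ^ s := by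
    have := mul_nonneg (pow_nonneg (mul_nonneg hq hr) s)
      (sub_nonneg.2 (pow_le_pow_left₀ hq hqr.le d))
    linear_combination this
  have hterm (t s : ℕ) : 0 ≤ ((t : ℝ) - s) * (r ^ t * q ^ s - q ^ t * r ^ s) := by
    rcases le_total s t with h | h
    all_goals
      obtain ⟨d, rfl⟩ := Nat.exists_eq_add_of_le h
      push_cast
    · linear_combination mul_nonneg d.cast_nonneg (hcross s d)
    · linear_combination mul_nonneg d.cast_nonneg (hcross t d)
  have hpos : 0 < ∑ t ∈ range (κ + 1), ∑ s ∈ range (κ + 1),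
      ((t : ℝ) - s) * (r ^ t * q ^ s - q ^ t * r ^ s) :=
    sum_pos' (fun t _ => sum_nonneg fun s _ => hterm t s)
      ⟨1, mem_range.2 (by omega), sum_pos' (fun s _ => hterm 1 s)
        ⟨0, mem_range.2 κ.succ_pos, by simpa using hqr⟩⟩
  have hexpand (t s : ℕ) : ((t : ℝ) - s) * (r ^ t * q ^ s - q ^ t * r ^ s) =
      t * r ^ t * q ^ s - t * q ^ t * r ^ s - r ^ t * (s * q ^ s) + q ^ t * (s * r ^ s) := by
    ring
  simp only [hexpand, sum_add_distrib, sum_sub_distrib, ← sum_mul_sum] at hpos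
  rw [tgMean_natCast, tgMean_natCast, div_lt_div_iff₀ (tgPartition_pos κ hq) (tgPartition_pos κ hr),
    tgPartition, tgPartition]
  linarith

lemma tgQ_tgMean {κ : ℕ} (hκ : κ ≠ 0) {q : ℝ} (hq : 0 ≤ q) : tgQ κ (tgMean κ q) = q :=
  IsLeast.csInf_eq
    ⟨⟨hq, le_rfl⟩, fun _ hr => ((strictMonoOn_tgMean hκ).le_iff_le hq hr.1).1 hr.2⟩

lemma tgQ_nonneg (κ : ℕ∞) (x : ℝ) : 0 ≤ tgQ κ x :=
  Real.sInf_nonneg fun _ hq => hq.1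

lemma Hmax_natCast (κ : ℕ) (x : ℝ) :
    Hmax κ x = log (tgPartition κ (tgQ κ x)) - tgMean κ (tgQ κ x) * log (tgQ κ x) := by
  set q := tgQ κ x with hq_def
  set S := tgPartition κ q with hS_def
  have hS : S ≠ 0 := (tgPartition_pos κ (tgQ_nonneg κ x)).ne'
  have hpmf (t : ℕ) : tgPMF κ x t = if t ∈ range (κ + 1) then q ^ t * S⁻¹ else 0 := by
    simp [tgPMF, tgP, ← hq_def, hS_def, tgPartition, mul_comm]
  have hterm (t : ℕ) : -(q ^ t * S⁻¹ * log (q ^ t * S⁻¹)) =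
      log S / S * q ^ t - log q / S * (t * q ^ t) := by
    rw [← neg_mul, ← negMulLog, negMulLog_mul, negMulLog, negMulLog, log_pow, log_inv]
    ring
  calc Hmax κ x = ∑ t ∈ range (κ + 1), -(q ^ t * S⁻¹ * log (q ^ t * S⁻¹)) := by
        rw [Hmax, tsum_eq_sum (s := range (κ + 1)) fun t ht => by simp [hpmf, ht],
          ← sum_neg_distrib]
        exact sum_congr rfl fun t ht => by rw [hpmf, if_pos ht]
    _ = log S / S * S - log q / S * ∑ t ∈ range (κ + 1), t * q ^ t := by
        simp only [hterm, sum_sub_distrib, ← mul_sum]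
        rfl
    _ = log S - tgMean κ q * log q := by
        rw [tgMean_natCast, div_mul_cancel₀ _ hS]
        ring

lemma hasDerivAt_tgPartition (κ : ℕ) (q : ℝ) :
    HasDerivAt (tgPartition κ) (∑ t ∈ range κ, (t + 1) * q ^ t) q := by
  refine (HasDerivAt.fun_sum fun t (_ : t ∈ range (κ + 1)) => hasDerivAt_pow t q).congr_deriv ?_
  simp [sum_range_succ']

lemma hasDerivAt_log_tgPartition {κ : ℕ} {q : ℝ} (hq : tgPartition κ q ≠ 0) :
    HasDerivAt (fun q => log (tgPartition κ q)) (tgMeanQuotient κ q) q :=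
  (hasDerivAt_tgPartition κ q).log hq

lemma analyticAt_tgMeanQuotient {κ : ℕ} {q : ℝ} (hq : tgPartition κ q ≠ 0) :
    AnalyticAt ℝ (tgMeanQuotient κ) q := by
  have hS : AnalyticAt ℝ (tgPartition κ) q := by
    unfold tgPartition
    fun_prop
  exact AnalyticAt.fun_div (by fun_prop) hS hq

lemma tgMeanQuotient_zero {κ : ℕ} (hκ : κ ≠ 0) : tgMeanQuotient κ 0 = 1 := by
  obtain ⟨k, rfl⟩ := Nat.exists_eq_succ_of_ne_zero hκ
  simp [tgMeanQuotient, tgPartition_zero, sum_range_succ']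

lemma hasDerivAt_tgMeanQuotient_zero {κ : ℕ} (hκ : 2 ≤ κ) :
    HasDerivAt (tgMeanQuotient κ) 1 0 := by
  obtain ⟨k, rfl⟩ := Nat.exists_eq_add_of_le' hκ
  have hnum : HasDerivAt (fun q : ℝ => ∑ t ∈ range (k + 2), ((t : ℝ) + 1) * q ^ t) 2 0 := by
    refine (HasDerivAt.fun_sum fun t (_ : t ∈ range (k + 2)) =>
      (hasDerivAt_pow t (0 : ℝ)).const_mul ((t : ℝ) + 1)).congr_deriv ?_
    norm_num [sum_range_succ']
  refine (hnum.fun_div (hasDerivAt_tgPartition (k + 2) 0)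
    (tgPartition_pos _ le_rfl).ne').congr_deriv ?_
  norm_num [tgPartition_zero, sum_range_succ']

lemma exists_analyticAt_tgQ {κ : ℕ} (hκ : κ ≠ 0) :
    ∃ Q : ℝ → ℝ, AnalyticAt ℝ Q 0 ∧ Q 0 = 0 ∧ HasDerivAt Q 1 0 ∧
      (∀ᶠ x in 𝓝 0, Q x * tgMeanQuotient κ (Q x) = x) ∧ ∀ᶠ x in 𝓝[≥] 0, tgQ κ x = Q x := by
  set μ : ℝ → ℝ := fun q => q * tgMeanQuotient κ q
  have hM : AnalyticAt ℝ (tgMeanQuotient κ) 0 :=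
    analyticAt_tgMeanQuotient (tgPartition_pos κ le_rfl).ne'
  have hμ : AnalyticAt ℝ μ 0 := by fun_prop
  have hμ_zero : μ 0 = 0 := zero_mul _
  have hμ' : deriv μ 0 = 1 := by
    have := ((hasDerivAt_id' (0 : ℝ)).fun_mul hM.differentiableAt.hasDerivAt).deriv
    simpa [tgMeanQuotient_zero hκ] using this
  have hμ'_ne : deriv μ 0 ≠ 0 := by simp [hμ']
  set Q := hμ.hasStrictDerivAt.localInverse μ _ 0 hμ'_ne
  have hQ : AnalyticAt ℝ Q 0 := hμ_zero ▸ hμ.analyticAt_localInverse hμ'_ne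
  have hQ_zero : Q 0 = 0 := by
    simpa only [hμ_zero] using
      (hμ.hasStrictDerivAt.hasStrictFDerivAt_equiv hμ'_ne).localInverse_apply_image
  have hQ' : HasDerivAt Q 1 0 := by
    simpa only [hμ_zero, hμ', inv_one] using
      (hμ.hasStrictDerivAt.to_localInverse hμ'_ne).hasDerivAt
  have hinv : ∀ᶠ x in 𝓝 0, Q x * tgMeanQuotient κ (Q x) = x := by
    simpa only [hμ_zero] using hμ.hasStrictDerivAt.eventually_right_inverse hμ'_ne
  have hM_pos : ∀ᶠ x in 𝓝 0, 0 < tgMeanQuotient κ (Q x) := by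
    refine (hM.continuousAt.comp_of_eq hQ.continuousAt hQ_zero).eventually_const_lt ?_
    simp [hQ_zero, tgMeanQuotient_zero hκ]
  refine ⟨Q, hQ, hQ_zero, hQ', hinv, ?_⟩
  filter_upwards [hinv.filter_mono nhdsWithin_le_nhds, hM_pos.filter_mono nhdsWithin_le_nhds,
    self_mem_nhdsWithin] with x hx hMx hx_nonneg
  have hQx : 0 ≤ Q x := nonneg_of_mul_nonneg_left (hx.symm ▸ hx_nonneg) hMx
  rw [← tgQ_tgMean hκ hQx, tgMean_eq_mul_tgMeanQuotient, hx]

/-- Since `H' = -log Q`, the part of the entropy left after splitting off `-x log x` has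
derivative `log (x / Q x) + 1`. -/
lemma hasDerivAt_log_tgPartition_add_mul_log {κ : ℕ} {Q : ℝ → ℝ} {x : ℝ}
    (hQ : DifferentiableAt ℝ Q x) (hinv : ∀ᶠ y in 𝓝 x, Q y * tgMeanQuotient κ (Q y) = y)
    (hS : tgPartition κ (Q x) ≠ 0) (hM : tgMeanQuotient κ (Q x) ≠ 0) :
    HasDerivAt (fun y => log (tgPartition κ (Q y)) + y * log (tgMeanQuotient κ (Q y)))
      (log (tgMeanQuotient κ (Q x)) + 1) x := by
  set M' := deriv (tgMeanQuotient κ) (Q x)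
  have hMQ : HasDerivAt (fun y => tgMeanQuotient κ (Q y)) (M' * deriv Q x) x :=
    (analyticAt_tgMeanQuotient hS).differentiableAt.hasDerivAt.comp x hQ.hasDerivAt
  have hinv' : deriv Q x * tgMeanQuotient κ (Q x) + Q x * (M' * deriv Q x) = 1 :=
    (hQ.hasDerivAt.fun_mul hMQ).unique ((hasDerivAt_id' x).congr_of_eventuallyEq hinv)
  refine (((hasDerivAt_log_tgPartition hS).comp x hQ.hasDerivAt).fun_add
    ((hasDerivAt_id' x).fun_mul (hMQ.log hM))).congr_deriv ?_
  have hx : Q x * tgMeanQuotient κ (Q x) = x := hinv.self_of_nhds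
  field_simp
  linear_combination tgMeanQuotient κ (Q x) * hinv' - M' * deriv Q x * hx

theorem exists_Hmax_eq_negMulLog_add {κ : ℕ} (hκ : 2 ≤ κ) :
    ∃ A : ℝ → ℝ, AnalyticAt ℝ A 0 ∧ 0 < deriv^[2] A 0 ∧
      ∀ᶠ x in 𝓝[≥] 0, Hmax κ x = negMulLog x + A x := by
  have hκ₀ : κ ≠ 0 := by omega
  obtain ⟨Q, hQ, hQ_zero, hQ', hinv, htgQ⟩ := exists_analyticAt_tgQ hκ₀
  set S : ℝ → ℝ := fun x => tgPartition κ (Q x) with hS_def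
  set M : ℝ → ℝ := fun x => tgMeanQuotient κ (Q x) with hM_def
  have hS_zero : S 0 = 1 := by simp [hS_def, hQ_zero, tgPartition_zero]
  have hM_zero : M 0 = 1 := by simp [hM_def, hQ_zero, tgMeanQuotient_zero hκ₀]
  have hS : AnalyticAt ℝ S 0 := by
    simp only [hS_def, tgPartition]
    fun_prop
  have hM : AnalyticAt ℝ M 0 :=
    (analyticAt_tgMeanQuotient (hS_zero.trans_ne one_ne_zero)).comp hQ
  have hM' : HasDerivAt M 1 0 :=
    ((hasDerivAt_tgMeanQuotient_zero hκ).comp_of_eq 0 hQ' hQ_zero.symm).congr_deriv (one_mul 1)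
  have hS_pos : ∀ᶠ x in 𝓝 0, 0 < S x := hS.continuousAt.eventually_const_lt (by simp [hS_zero])
  have hM_pos : ∀ᶠ x in 𝓝 0, 0 < M x := hM.continuousAt.eventually_const_lt (by simp [hM_zero])
  have hderiv : deriv (fun x => log (S x) + x * log (M x)) =ᶠ[𝓝 0] fun x => log (M x) + 1 := by
    filter_upwards [hQ.eventually_analyticAt, hinv.eventually_nhds, hS_pos, hM_pos]
      with x hQx hinvx hSx hMx
    exact (hasDerivAt_log_tgPartition_add_mul_log hQx.differentiableAt hinvx hSx.ne' hMx.ne').deriv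
  refine ⟨fun x => log (S x) + x * log (M x), ?_, ?_, ?_⟩
  · exact (hS.log (by simp [hS_zero])).fun_add
      (analyticAt_id.fun_mul (hM.log (by simp [hM_zero])))
  · rw [Function.iterate_succ_apply, Function.iterate_one, hderiv.deriv_eq,
      ((hM'.log (by simp [hM_zero])).add_const 1).deriv, hM_zero]
    norm_num
  · filter_upwards [htgQ, hinv.filter_mono nhdsWithin_le_nhds,
      hM_pos.filter_mono nhdsWithin_le_nhds] with x hQx hx hMx
    have hlog : x * log x = x * (log (Q x) + log (M x)) := by
      rcases eq_or_ne x 0 with rfl | hx_ne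
      · simp
      · rw [← log_mul (left_ne_zero_of_mul (hx.trans_ne hx_ne)) hMx.ne', hx]
    rw [Hmax_natCast, hQx, tgMean_eq_mul_tgMeanQuotient, hx, negMulLog]
    linear_combination hlog

end TruncatedGeometric

theorem entropyLoss_inequality_general (κ : ℕ) (hκ : 2 ≤ κ) :
    ∃ δ : ℝ, δ ∈ Set.Ioo (0 : ℝ) 1 ∧
      ∀ {I J : Type*} [Fintype I] [Fintype J] (R : I → ℝ) (C : J → ℝ) (N : ℝ),
        (∀ i, 0 ≤ R i) → (∀ j, 0 ≤ C j) → ∑ i, R i = N → ∑ j, C j = N →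
        (⨆ i, R i) * (⨆ j, C j) < δ * κ * N →
        (Fintype.card J * ∑ i, Hmax κ (R i / Fintype.card J) - ∑ i, ∑ j, Hmax κ (R i * C j / N) ≤
          Fintype.card I * Fintype.card J * Hmax κ (N / (Fintype.card I * Fintype.card J)) -
            Fintype.card I * ∑ j, Hmax κ (C j / Fintype.card I)) ∧
        ((¬ ∀ i i', R i = R i') → (¬ ∀ j j', C j = C j') →
          Fintype.card J * ∑ i, Hmax κ (R i / Fintype.card J) - ∑ i, ∑ j, Hmax κ (R i * C j / N) <
          Fintype.card I * Fintype.card J * Hmax κ (N / (Fintype.card I * Fintype.card J)) -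
            Fintype.card I * ∑ j, Hmax κ (C j / Fintype.card I)) := by
  obtain ⟨A, hA, hA_pos, hHmax⟩ := exists_Hmax_eq_negMulLog_add hκ
  obtain ⟨b, hb, hconv⟩ := exists_convexOn_dilationGap_of_eq_negMulLog_add hA hA_pos hHmax
  have hκ_pos : (0 : ℝ) < κ := by positivity
  refine ⟨min (b / κ) (1 / 2), ⟨by positivity, by linarith [min_le_right (b / κ) (1 / 2)]⟩, ?_⟩
  intro I J _ _ R C N hR₀ hC₀ hR hC hlt
  have hR_le (i : I) : R i ≤ ⨆ i, R i := le_ciSup (Set.finite_range R).bddAbove i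
  have hC_le (j : J) : C j ≤ ⨆ j, C j := le_ciSup (Set.finite_range C).bddAbove j
  have hN : 0 < N := pos_of_mul_pos_right
    ((mul_nonneg (Real.iSup_nonneg hR₀) (Real.iSup_nonneg hC₀)).trans_lt hlt) (by positivity)
  have hsparse (j : J) : (⨆ i, R i) * (C j / N) < b := by
    rw [← mul_div_assoc, div_lt_iff₀ hN]
    calc (⨆ i, R i) * C j ≤ (⨆ i, R i) * ⨆ j, C j :=
          mul_le_mul_of_nonneg_left (hC_le j) (Real.iSup_nonneg hR₀)
      _ < min (b / κ) (1 / 2) * κ * N := hlt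
      _ ≤ b / κ * κ * N := by gcongr; exact min_le_left _ _
      _ = b * N := by rw [div_mul_cancel₀ _ hκ_pos.ne']
  obtain ⟨hgap, hgap_strict⟩ := hconv (w := fun j => C j / N)
    (fun j => div_nonneg (hC₀ j) hN.le) (by rw [← sum_div, hC, div_self hN.ne']) hsparse
  have hmem (i : I) : R i ∈ Set.Icc 0 (⨆ i, R i) := ⟨hR₀ i, hR_le i⟩
  refine ⟨sub_nonneg.1 ?_, fun hR_ne hC_ne => sub_pos.1 ?_⟩
  all_goals rw [← sum_dilationGap_sub_card_mul (Hmax κ) R C hN.ne']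
  · simpa only [hR, sub_nonneg] using card_mul_map_mean_le_sum hgap hmem
  · push Not at hR_ne hC_ne
    obtain ⟨j, j', hjj'⟩ := hC_ne
    have hw_ne : C j / N ≠ C j' / N := by rwa [Ne, div_left_inj' hN.ne']
    simpa only [hR, sub_pos] using card_mul_map_mean_lt_sum (hgap_strict ⟨j, j', hw_ne⟩) hmem hR_ne

/-- **Key inequality for Theorem 4.** For `κ ≥ 2` there is `δ = δ(κ) ∈ (0,1)` such that
for sparse margins the entropy-loss inequality holds, strictly when neither margin is
constant. -/
theorem entropyLoss_inequality (κ : ℕ) (hκ : 2 ≤ κ) :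
    ∃ δ : ℝ, δ ∈ Set.Ioo (0 : ℝ) 1 ∧
      ∀ (m n : ℕ) (R : Fin m → ℕ) (C : Fin n → ℕ) (N : ℕ),
        ∑ i, R i = N → ∑ j, C j = N → 0 < N →
        (⨆ i, (R i : ℝ)) * (⨆ j, (C j : ℝ)) < δ * κ * N →
        ((n : ℝ) * ∑ i, Hmax (κ : ℕ∞) ((R i : ℝ) / n) -
            ∑ i, ∑ j, Hmax (κ : ℕ∞) ((R i : ℝ) * (C j : ℝ) / N) ≤
          (m : ℝ) * n * Hmax (κ : ℕ∞) ((N : ℝ) / (m * n)) -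
            (m : ℝ) * ∑ j, Hmax (κ : ℕ∞) ((C j : ℝ) / m)) ∧
        ((¬ ∀ i i', R i = R i') → (¬ ∀ j j', C j = C j') →
          (n : ℝ) * ∑ i, Hmax (κ : ℕ∞) ((R i : ℝ) / n) -
            ∑ i, ∑ j, Hmax (κ : ℕ∞) ((R i : ℝ) * (C j : ℝ) / N) <
          (m : ℝ) * n * Hmax (κ : ℕ∞) ((N : ℝ) / (m * n)) -
            (m : ℝ) * ∑ j, Hmax (κ : ℕ∞) ((C j : ℝ) / m)) := by
  obtain ⟨δ, hδ, h⟩ := entropyLoss_inequality_general κ hκ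
  exact ⟨δ, hδ, fun m n R C N hR hC _ hRC => by
    simpa only [Fintype.card_fin, Nat.cast_inj] using
      h (fun i => (R i : ℝ)) (fun j => (C j : ℝ)) N (fun i => (R i).cast_nonneg)
        (fun j => (C j).cast_nonneg) (by exact_mod_cast hR) (by exact_mod_cast hC) hRC⟩
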